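/- Conservation law of the energy–momentum tensor at the level of cycles: fix n ≥ 2. With G_{μν} := (ē₁ − (−1)^ν·e₁) · ( (−1)^{μ+n}·Π·∏_{a=1}^{n−1} A_a^{2a−1} + ∏_{a=1}^{n−1} A_a^{2a+1} ), one has, for each ν ∈ {0,1}: Asym( (ē₁ + e₁)·G_{0ν} − (ē₁ − e₁)·G_{1ν} ) ∈ K. -/

import Mathlib

open Finset Equiv

/-- The polynomial ring `ℂ[A₁,…,A_{n−1}, B₁,…,B_{2n}]`. -/
abbrev PolyRing (n : ℕ) := MvPolynomial (Fin (n - 1) ⊕ Fin (2 * n)) ℂ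

/-- The field `F = ℂ(A₁,…,A_{n−1}, B₁,…,B_{2n})` of rational functions. -/
abbrev RatField (n : ℕ) := FractionRing (PolyRing n)

/-- The variable `A_a` (indexed from `0`) inside `F`. -/
noncomputable def Av (n : ℕ) (a : Fin (n - 1)) : RatField n :=
  algebraMap (PolyRing n) (RatField n) (MvPolynomial.X (Sum.inl a))

/-- The variable `B_j` (indexed from `0`) inside `F`. -/
noncomputable def Bv (n : ℕ) (j : Fin (2 * n)) : RatField n :=
  algebraMap (PolyRing n) (RatField n) (MvPolynomial.X (Sum.inr j))

/-- The field automorphism of `F` substituting `A_a ↦ A_{σ(a)}` (fixing the `B`'s). -/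
noncomputable def permA (n : ℕ) (σ : Equiv.Perm (Fin (n - 1))) :
    RatField n ≃+* RatField n :=
  IsFractionRing.ringEquivOfRingEquiv
    ((MvPolynomial.renameEquiv ℂ (Equiv.sumCongr σ (Equiv.refl (Fin (2 * n))))).toRingEquiv)

/-- Antisymmetrization over the `A`-variables:
`Asym f := ∑_{σ ∈ S_{n−1}} sgn(σ)·f(A_{σ(1)},…,A_{σ(n−1)})`. -/
noncomputable def Asym (n : ℕ) (x : RatField n) : RatField n :=
  ∑ σ : Equiv.Perm (Fin (n - 1)), ((Equiv.Perm.sign σ : ℤ) : RatField n) * permA n σ x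

/-- `Θ̂₊(x) := ∏_{j=1}^{2n}(1 + x·B_j⁻¹)`. -/
noncomputable def ThetaP (n : ℕ) (x : RatField n) : RatField n :=
  ∏ j, (1 + x * (Bv n j)⁻¹)

/-- `Θ̂₋(x) := ∏_{j=1}^{2n}(1 − x·B_j⁻¹)`. -/
noncomputable def ThetaM (n : ℕ) (x : RatField n) : RatField n :=
  ∏ j, (1 - x * (Bv n j)⁻¹)

/-- `Ξ̂¹(x) := Θ̂₊(x) − Θ̂₋(x)`. -/
noncomputable def Xi1 (n : ℕ) (x : RatField n) : RatField n :=
  ThetaP n x - ThetaM n x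

/-- `Ξ̂²(x,y) := (Θ̂₊(x)Θ̂₊(y) − Θ̂₋(x)Θ̂₋(y))·(x−y)/(x+y) + Θ̂₊(x)Θ̂₋(y) − Θ̂₋(x)Θ̂₊(y)`. -/
noncomputable def Xi2 (n : ℕ) (x y : RatField n) : RatField n :=
  (ThetaP n x * ThetaP n y - ThetaM n x * ThetaM n y) * (x - y) / (x + y) +
    ThetaP n x * ThetaM n y - ThetaM n x * ThetaP n y

/-- The subfield `𝔹 = ℂ(B₁,…,B_{2n}) ⊆ F`. -/
noncomputable def BField (n : ℕ) : Subfield (RatField n) :=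
  Subfield.closure
    (Set.range (fun c : ℂ => algebraMap (PolyRing n) (RatField n) (MvPolynomial.C c)) ∪
      Set.range (Bv n))

/-- The `𝔹`-submodule `K ⊆ F` spanned by the antisymmetrized deformed cycles
`Asym(Ξ̂¹(A₁)·∏_{a=2}^{n−1} A_a^{r_a})` and
`Asym(Ξ̂²(A₁,A₂)·∏_{a=3}^{n−1} A_a^{r_a})` with `0 ≤ r_a ≤ 2n−1`. -/
noncomputable def Kspan (n : ℕ) : Submodule (BField n) (RatField n) :=
  Submodule.span (BField n)
    ({x | ∃ (h : 0 < n - 1) (r : Fin (n - 1) → ℕ), (∀ a, r a ≤ 2 * n - 1) ∧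
        x = Asym n (Xi1 n (Av n ⟨0, h⟩) *
          ∏ a ∈ Finset.univ.filter (fun a : Fin (n - 1) => 0 < (a : ℕ)),
            (Av n a) ^ (r a))} ∪
     {x | ∃ (h : 1 < n - 1) (r : Fin (n - 1) → ℕ), (∀ a, r a ≤ 2 * n - 1) ∧
        x = Asym n (Xi2 n (Av n ⟨0, by omega⟩) (Av n ⟨1, h⟩) *
          ∏ a ∈ Finset.univ.filter (fun a : Fin (n - 1) => 1 < (a : ℕ)),
            (Av n a) ^ (r a))})

/-- `e₁ = ∑_j B_j`. -/
noncomputable def eOne (n : ℕ) : RatField n := ∑ j, Bv n j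

/-- `ē₁ = ∑_j B_j⁻¹`. -/
noncomputable def eBarOne (n : ℕ) : RatField n := ∑ j, (Bv n j)⁻¹

/-- `Π = ∏_j B_j`. -/
noncomputable def PiB (n : ℕ) : RatField n := ∏ j, Bv n j

/-- The cycle `G_{μν} = (ē₁ − (−1)^ν·e₁)·((−1)^{μ+n}·Π·∏_{a=1}^{n−1} A_a^{2a−1}
  + ∏_{a=1}^{n−1} A_a^{2a+1})` of the energy–momentum tensor. -/
noncomputable def Gcyc (n : ℕ) (μ ν : Fin 2) : RatField n :=
  (eBarOne n - (-1 : RatField n) ^ (ν : ℕ) * eOne n) *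
    ((-1 : RatField n) ^ ((μ : ℕ) + n) * PiB n *
        (∏ a : Fin (n - 1), (Av n a) ^ (2 * (a : ℕ) + 1)) +
      ∏ a : Fin (n - 1), (Av n a) ^ (2 * (a : ℕ) + 3))

/-!
The whole conservation law comes from one relation in `K`, the antisymmetrization of
`Ξ̂¹(A₁)·A₂³⋯A_{n−1}^{2n−3}`. Since `Ξ̂¹(x) = 2·∑_q ē_{2q+1}·x^{2q+1}`, with `ē_p` the elementary
symmetric functions of the `B_j⁻¹`, this is a combination of alternants with exponents
`(2q+1, 3, 5, …, 2n−3)`. An alternant with a repeated exponent vanishes, so only `q = 0` and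
`q = n−1` survive. Up to sign they are the two alternants occurring in `G_{μν}`, the second one
after a cyclic rotation of the exponents, and `Π·ē_{2n−1} = e₁` matches the coefficients.
-/

section ElementarySymmetric

variable {ι R : Type*}

lemma prod_one_add_mul_eq_sum_esymm [CommSemiring R] (s : Finset ι) (f : ι → R) (x : R) :
    ∏ i ∈ s, (1 + x * f i) = ∑ p ∈ range (#s + 1), (s.val.map f).esymm p * x ^ p := by
  rw [prod_one_add, sum_powerset]
  refine sum_congr rfl fun p _ => ?_
  rw [Finset.esymm_map_val, sum_mul]
  refine sum_congr rfl fun t ht => ?_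
  rw [prod_mul_distrib, prod_const, (mem_powersetCard.1 ht).2, mul_comm]

lemma esymm_map_val_one [CommSemiring R] (s : Finset ι) (f : ι → R) :
    (s.val.map f).esymm 1 = ∑ i ∈ s, f i := by
  simp [Finset.esymm_map_val, powersetCard_one]

lemma prod_mul_esymm_inv [Field R] (s : Finset ι) (f : ι → R) (hf : ∀ i ∈ s, f i ≠ 0) {k : ℕ}
    (hk : k ≤ #s) :
    (∏ i ∈ s, f i) * (s.val.map fun i => (f i)⁻¹).esymm (#s - k) = (s.val.map f).esymm k := by
  classical
  rw [Finset.esymm_map_val, Finset.esymm_map_val, mul_sum]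
  refine sum_bij' (fun t _ => s \ t) (fun t _ => s \ t) ?_ ?_ ?_ ?_ ?_
  · grind [card_sdiff_of_subset]
  · grind [card_sdiff_of_subset]
  · grind
  · grind
  · intro t ht
    have hts : t ⊆ s := (mem_powersetCard.1 ht).1
    have ht0 : ∏ i ∈ t, f i ≠ 0 := prod_ne_zero_iff.2 fun i hi => hf i (hts hi)
    rw [← prod_sdiff hts, prod_inv_distrib, mul_inv_cancel_right₀ ht0]

end ElementarySymmetric

lemma sum_range_one_sub_neg_one_pow_mul {R : Type*} [CommRing R] (f : ℕ → R) (n : ℕ) :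
    ∑ p ∈ range (2 * n + 1), (1 - (-1) ^ p) * f p = 2 * ∑ q ∈ range n, f (2 * q + 1) := by
  induction n with
  | zero => simp
  | succ n ih =>
    rw [mul_add_one, sum_range_succ, sum_range_succ, ih, sum_range_succ _ n]
    simp only [pow_add, pow_mul]
    ring

lemma pow_mul_prod_filter_pos {M : Type*} [CommMonoid M] {k : ℕ} (x : Fin (k + 1) → M) (p : ℕ)
    (r : Fin (k + 1) → ℕ) :
    x 0 ^ p * ∏ a ∈ univ.filter (fun a : Fin (k + 1) => 0 < (a : ℕ)), x a ^ r a =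
      ∏ a, x a ^ (Fin.cons p (Fin.tail r) : Fin (k + 1) → ℕ) a := by
  have hIoi : univ.filter (fun a : Fin (k + 1) => 0 < (a : ℕ)) = Ioi 0 := by
    ext a
    simp [Nat.pos_iff_ne_zero]
  rw [hIoi, Fin.prod_Ioi_zero, Fin.prod_univ_succ]
  rfl

section Alternant

/-- The alternant (generalized Vandermonde determinant) `det (x_i ^ r_j)` of the points `x` with
exponents `r`: the antisymmetrization of the monomial `∏ x_a ^ r_a`. -/
def alternant {ι R : Type*} [Fintype ι] [DecidableEq ι] [CommRing R] (x : ι → R) (r : ι → ℕ) : R :=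
  (Matrix.of fun i j => x i ^ r j).det

variable {R : Type*} [CommRing R]

lemma alternant_comp_perm {ι : Type*} [Fintype ι] [DecidableEq ι] (x : ι → R) (r : ι → ℕ)
    (σ : Perm ι) : alternant x (r ∘ σ) = (Perm.sign σ : ℤ) * alternant x r :=
  Matrix.det_permute' σ (Matrix.of fun i j => x i ^ r j)

lemma alternant_cons_apply_eq_zero {k : ℕ} (x : Fin (k + 1) → R) (r : Fin k → ℕ) (j : Fin k) :
    alternant x (Fin.cons (r j) r) = 0 :=
  Matrix.det_zero_of_column_eq (Fin.succ_ne_zero j).symm fun i => by simp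

lemma alternant_snoc {k : ℕ} (x : Fin (k + 1) → R) (r : Fin k → ℕ) (p : ℕ) :
    alternant x (Fin.snoc r p) = (-1) ^ k * alternant x (Fin.cons p r) := by
  have hrot : (Fin.snoc r p : Fin (k + 1) → ℕ) =
      (Fin.cons p r : Fin (k + 1) → ℕ) ∘ finRotate (k + 1) :=
    Fin.snoc_eq_cons_rotate r p
  rw [hrot, alternant_comp_perm, sign_finRotate]
  simp

end Alternant

section Antisymmetrization

variable {n : ℕ}

lemma permA_Av (σ : Perm (Fin (n - 1))) (a : Fin (n - 1)) :
    permA n σ (Av n a) = Av n (σ a) := by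
  simp [permA, Av]

lemma permA_Bv (σ : Perm (Fin (n - 1))) (j : Fin (2 * n)) : permA n σ (Bv n j) = Bv n j := by
  simp [permA, Bv]

lemma permA_algebraMap_C (σ : Perm (Fin (n - 1))) (c : ℂ) :
    permA n σ (algebraMap (PolyRing n) (RatField n) (MvPolynomial.C c)) =
      algebraMap (PolyRing n) (RatField n) (MvPolynomial.C c) := by
  simp [permA]

lemma permA_eq_self_of_mem (σ : Perm (Fin (n - 1))) {c : RatField n} (hc : c ∈ BField n) :
    permA n σ c = c := by
  have hle : BField n ≤ (permA n σ : RatField n →+* RatField n).eqLocusField (RingHom.id _) := by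
    refine Subfield.closure_le.2 (Set.union_subset ?_ ?_)
    · rintro _ ⟨c, rfl⟩
      exact permA_algebraMap_C σ c
    · rintro _ ⟨j, rfl⟩
      exact permA_Bv σ j
  exact hle hc

lemma Asym_add (x y : RatField n) : Asym n (x + y) = Asym n x + Asym n y := by
  simp [Asym, mul_add, sum_add_distrib]

lemma Asym_sum {ι : Type*} (s : Finset ι) (f : ι → RatField n) :
    Asym n (∑ i ∈ s, f i) = ∑ i ∈ s, Asym n (f i) := by
  simp only [Asym, map_sum, mul_sum]
  exact sum_comm

lemma Asym_mul_of_mem {c : RatField n} (hc : c ∈ BField n) (x : RatField n) :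
    Asym n (c * x) = c * Asym n x := by
  simp only [Asym, map_mul, permA_eq_self_of_mem _ hc, mul_sum, mul_left_comm c]

lemma Asym_prod_pow (r : Fin (n - 1) → ℕ) :
    Asym n (∏ a, Av n a ^ r a) = alternant (Av n) r := by
  simp only [Asym, alternant, Matrix.det_apply', map_prod, map_pow, permA_Av, Matrix.of_apply]

lemma mul_mem_Kspan {c x : RatField n} (hc : c ∈ BField n) (hx : x ∈ Kspan n) :
    c * x ∈ Kspan n :=
  (Kspan n).smul_mem ⟨c, hc⟩ hx

end Antisymmetrization

lemma Bv_ne_zero {n : ℕ} (j : Fin (2 * n)) : Bv n j ≠ 0 := by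
  simp [Bv]

lemma Bv_mem_BField {n : ℕ} (j : Fin (2 * n)) : Bv n j ∈ BField n :=
  Subfield.subset_closure (Or.inr ⟨j, rfl⟩)

lemma eOne_mem_BField (n : ℕ) : eOne n ∈ BField n :=
  sum_mem fun j _ => Bv_mem_BField j

lemma eBarOne_mem_BField (n : ℕ) : eBarOne n ∈ BField n :=
  sum_mem fun j _ => inv_mem (Bv_mem_BField j)

lemma PiB_mem_BField (n : ℕ) : PiB n ∈ BField n :=
  prod_mem fun j _ => Bv_mem_BField j

/-- The elementary symmetric function `ē_p` of degree `p` in `B₁⁻¹, …, B_{2n}⁻¹`: the coefficient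
of `x ^ p` in `Θ̂₊(x)`. -/
noncomputable def eBar (n p : ℕ) : RatField n :=
  ((univ : Finset (Fin (2 * n))).val.map fun j => (Bv n j)⁻¹).esymm p

lemma eBar_mem_BField (n p : ℕ) : eBar n p ∈ BField n := by
  rw [eBar, Finset.esymm_map_val]
  exact sum_mem fun t _ => prod_mem fun j _ => inv_mem (Bv_mem_BField j)

lemma eBar_one (n : ℕ) : eBar n 1 = eBarOne n :=
  esymm_map_val_one _ _

lemma PiB_mul_eBar {n : ℕ} (hn : n ≠ 0) : PiB n * eBar n (2 * n - 1) = eOne n := by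
  have h := prod_mul_esymm_inv univ (Bv n) (fun j _ => Bv_ne_zero j) (k := 1)
    (by rw [card_fin]; omega)
  rwa [card_fin, esymm_map_val_one] at h

lemma ThetaP_eq_sum (n : ℕ) (x : RatField n) :
    ThetaP n x = ∑ p ∈ range (2 * n + 1), eBar n p * x ^ p := by
  rw [ThetaP, prod_one_add_mul_eq_sum_esymm, card_fin]
  rfl

lemma ThetaM_eq_ThetaP_neg (n : ℕ) (x : RatField n) : ThetaM n x = ThetaP n (-x) := by
  simp only [ThetaM, ThetaP, neg_mul, sub_eq_add_neg]

lemma Xi1_eq_sum_odd (n : ℕ) (x : RatField n) :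
    Xi1 n x = 2 * ∑ q ∈ range n, eBar n (2 * q + 1) * x ^ (2 * q + 1) := by
  rw [Xi1, ThetaM_eq_ThetaP_neg, ThetaP_eq_sum, ThetaP_eq_sum, ← sum_sub_distrib,
    ← sum_range_one_sub_neg_one_pow_mul fun p => eBar n p * x ^ p]
  refine sum_congr rfl fun p _ => ?_
  rw [neg_pow]
  ring

section Relation

variable (k : ℕ)

/-- The element `Asym(Ξ̂¹(A₁)·A₂³⋯A_{n−1}^{2n−3})` of `K` for `n = k + 2`. -/
noncomputable def oddRelation : RatField (k + 2) :=
  Asym (k + 2) (Xi1 (k + 2) (Av (k + 2) (0 : Fin (k + 1))) *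
    ∏ a ∈ univ.filter (fun a : Fin (k + 2 - 1) => 0 < (a : ℕ)),
      Av (k + 2) a ^ (2 * (a : ℕ) + 1))

lemma oddRelation_mem_Kspan : oddRelation k ∈ Kspan (k + 2) :=
  Submodule.subset_span <| Or.inl
    ⟨k.succ_pos, fun a => 2 * (a : ℕ) + 1, fun a => by dsimp only; omega, rfl⟩

/-- The alternant of `A₁, …, A_{n−1}` with exponents `(p, 3, 5, …, 2n−3)` for `n = k + 2`: the
contribution of `x ^ p` in `Ξ̂¹(x)` to `oddRelation k`. The index type is written `Fin (k + 1)`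
rather than `Fin (k + 2 - 1)` so that `Fin.cons` applies. -/
noncomputable def oddAlternant (p : ℕ) : RatField (k + 2) :=
  alternant (ι := Fin (k + 1)) (Av (k + 2)) (Fin.cons p fun a : Fin k => 2 * (a : ℕ) + 3)

lemma Asym_prod_pow_two_mul_add_one :
    Asym (k + 2) (∏ a, Av (k + 2) a ^ (2 * (a : ℕ) + 1)) = oddAlternant k 1 := by
  rw [Asym_prod_pow]
  refine congrArg (alternant (ι := Fin (k + 1)) (Av (k + 2))) (funext fun a => ?_)
  cases a using Fin.cases <;> simp [mul_add]

lemma Asym_prod_pow_two_mul_add_three :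
    Asym (k + 2) (∏ a, Av (k + 2) a ^ (2 * (a : ℕ) + 3)) =
      (-1) ^ k * oddAlternant k (2 * k + 3) := by
  rw [Asym_prod_pow, oddAlternant, ← alternant_snoc]
  refine congrArg (alternant (ι := Fin (k + 1)) (Av (k + 2))) (funext fun a => ?_)
  cases a using Fin.lastCases <;> simp

lemma oddAlternant_eq_zero {k q : ℕ} (hq : q < k) : oddAlternant k (2 * q + 3) = 0 :=
  alternant_cons_apply_eq_zero _ (fun a : Fin k => 2 * (a : ℕ) + 3) ⟨q, hq⟩

lemma oddRelation_eq_sum :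
    oddRelation k =
      2 * ∑ q ∈ range (k + 2), eBar (k + 2) (2 * q + 1) * oddAlternant k (2 * q + 1) := by
  have hterm (p : ℕ) :
      Asym (k + 2) (eBar (k + 2) p * Av (k + 2) (0 : Fin (k + 1)) ^ p *
        ∏ a ∈ univ.filter (fun a : Fin (k + 2 - 1) => 0 < (a : ℕ)),
          Av (k + 2) a ^ (2 * (a : ℕ) + 1)) =
      eBar (k + 2) p * oddAlternant k p := by
    rw [mul_assoc, Asym_mul_of_mem (eBar_mem_BField _ _)]
    congr 1
    exact (congrArg _ (pow_mul_prod_filter_pos (k := k) (Av (k + 2)) p _)).trans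
      (Asym_prod_pow (n := k + 2) _)
  rw [oddRelation, Xi1_eq_sum_odd, mul_assoc, Asym_mul_of_mem (ofNat_mem _ 2), sum_mul, Asym_sum]
  simp only [hterm]

lemma oddRelation_eq :
    oddRelation k = 2 * (eBarOne (k + 2) * oddAlternant k 1 +
      eBar (k + 2) (2 * k + 3) * oddAlternant k (2 * k + 3)) := by
  have hmiddle : ∑ q ∈ range k,
      eBar (k + 2) (2 * (q + 1) + 1) * oddAlternant k (2 * (q + 1) + 1) = 0 :=
    sum_eq_zero fun q hq => by
      rw [mul_add_one, oddAlternant_eq_zero (mem_range.1 hq), mul_zero]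
  rw [oddRelation_eq_sum, sum_range_succ', sum_range_succ, hmiddle, zero_add, mul_add_one 2 k,
    mul_zero, zero_add, eBar_one]
  ring

end Relation

lemma Asym_eBarOne_add_eOne_mem_Kspan {n : ℕ} (hn : 2 ≤ n) :
    Asym n (eBarOne n * ((-1) ^ n * PiB n * ∏ a, Av n a ^ (2 * (a : ℕ) + 1)) +
      eOne n * ∏ a, Av n a ^ (2 * (a : ℕ) + 3)) ∈ Kspan n := by
  obtain ⟨k, rfl⟩ : ∃ k, n = k + 2 := ⟨n - 2, by omega⟩
  have hsign : (-1 : RatField (k + 2)) ^ k ∈ BField (k + 2) := pow_mem (neg_mem (one_mem _)) k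
  have hPi : PiB (k + 2) * eBar (k + 2) (2 * k + 3) = eOne (k + 2) := PiB_mul_eBar (by omega)
  have hAsym : Asym (k + 2)
      (eBarOne (k + 2) * ((-1) ^ (k + 2) * PiB (k + 2) *
          ∏ a, Av (k + 2) a ^ (2 * (a : ℕ) + 1)) +
        eOne (k + 2) * ∏ a, Av (k + 2) a ^ (2 * (a : ℕ) + 3)) =
      (-1) ^ k * PiB (k + 2) * 2⁻¹ * oddRelation k := by
    have hsq : (-1 : RatField (k + 2)) ^ (k + 2) = (-1) ^ k := by ring
    rw [Asym_add, hsq, Asym_mul_of_mem (eBarOne_mem_BField _),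
      Asym_mul_of_mem (mul_mem hsign (PiB_mem_BField _)), Asym_mul_of_mem (eOne_mem_BField _),
      Asym_prod_pow_two_mul_add_one, Asym_prod_pow_two_mul_add_three, oddRelation_eq, ← hPi]
    ring
  rw [hAsym]
  exact mul_mem_Kspan (mul_mem (mul_mem hsign (PiB_mem_BField _)) (inv_mem (ofNat_mem _ 2)))
    (oddRelation_mem_Kspan k)

/-- Conservation law of the energy–momentum tensor at the level of cycles:
for `n ≥ 2` and each `ν ∈ {0,1}`,
`Asym((ē₁ + e₁)·G_{0ν} − (ē₁ − e₁)·G_{1ν}) ∈ K`. -/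
theorem emTensor_conservation (n : ℕ) (hn : 2 ≤ n) (ν : Fin 2) :
    Asym n ((eBarOne n + eOne n) * Gcyc n 0 ν -
      (eBarOne n - eOne n) * Gcyc n 1 ν) ∈ Kspan n := by
  have hc : 2 * (eBarOne n - (-1) ^ (ν : ℕ) * eOne n) ∈ BField n :=
    mul_mem (ofNat_mem _ 2) (sub_mem (eBarOne_mem_BField n)
      (mul_mem (pow_mem (neg_mem (one_mem _)) _) (eOne_mem_BField n)))
  have hcycle : (eBarOne n + eOne n) * Gcyc n 0 ν - (eBarOne n - eOne n) * Gcyc n 1 ν =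
      2 * (eBarOne n - (-1) ^ (ν : ℕ) * eOne n) *
        (eBarOne n * ((-1) ^ n * PiB n * ∏ a, Av n a ^ (2 * (a : ℕ) + 1)) +
          eOne n * ∏ a, Av n a ^ (2 * (a : ℕ) + 3)) := by
    simp only [Gcyc, Fin.val_zero, Fin.val_one, pow_add]
    ring
  rw [hcycle, Asym_mul_of_mem hc]
  exact mul_mem_Kspan hc (Asym_eBarOne_add_eOne_mem_Kspan hn)
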